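/- arXiv:2506.15730 — 2 statements merged into one kernel-verified Lean document; each statement's English description precedes it below -/
import Mathlib

section
/- Let η(x) > 0 and B^{ij}(x) be smooth with B symmetric. Let φ(x,t) > 0 solve the even-symmetric forward equation η ∂φ/∂t = ∂_i(η B^{ij} ∂_j φ), let ψ(x,t) > 0 solve the even-symmetric backward equation −η ∂ψ/∂t = ∂_i(η B^{ij} ∂_j ψ), and let C₁ ≠ 0 be a constant. Then f := η φ ψ / C₁ satisfies, pointwise, ∂f/∂t = ∂_i( B^{ij} f ( ∂_j ln φ − ∂_j ln ψ ) ) = ∂_i( (η/C₁) B^{ij} ( ψ ∂_j φ − φ ∂_j ψ ) ). -/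
/-!
Write `F i = η ∑ j, B i j ∂_j φ` and `G i = η ∑ j, B i j ∂_j ψ` for the fluxes of the forward and
backward equations. The flux `(η / C₁) ∑ j, B i j (ψ ∂_j φ - φ ∂_j ψ)` equals
`(ψ F i - φ G i) / C₁`, and its divergence is
`(ψ ∑ i, ∂_i F i - φ ∑ i, ∂_i G i) / C₁ + (∑ i, (∂_i ψ) F i - ∑ i, (∂_i φ) G i) / C₁`.
The last bracket vanishes by symmetry of `B` (`sum_mul_sum_symm`), and the two equations turn the
rest into `η (ψ ∂_t φ + φ ∂_t ψ) / C₁ = ∂_t f`. The logarithmic form of the flux agrees pointwise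
with the other one, because `∂_j log u = ∂_j u / u` for `u > 0`.
-/

open MeasureTheory

/-- Partial derivative `∂_i f` of a function on `ℝⁿ`. -/
noncomputable def pd {n : ℕ} (i : Fin n) (f : (Fin n → ℝ) → ℝ) (x : Fin n → ℝ) : ℝ :=
  fderiv ℝ f x (Pi.single i 1)

lemma pd_log {n : ℕ} (j : Fin n) {u : (Fin n → ℝ) → ℝ} {y : Fin n → ℝ}
    (hu : DifferentiableAt ℝ u y) (h0 : u y ≠ 0) :
    pd j (fun z => Real.log (u z)) y = pd j u y / u y := by
  simp only [pd]
  rw [fderiv.log hu h0]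
  simp [div_eq_inv_mul]

lemma contDiff_pd {n : ℕ} (j : Fin n) {u : (Fin n → ℝ) → ℝ} (hu : ContDiff ℝ (⊤ : ℕ∞) u) :
    ContDiff ℝ (⊤ : ℕ∞) (pd j u) :=
  (hu.fderiv_right (m := (⊤ : ℕ∞)) (by norm_cast)).clm_apply contDiff_const

/-- Leibniz rule for the antisymmetrised flux `c (b F - a G)`, with the first-order cross terms grouped
last. -/
lemma pd_flux {n : ℕ} (i : Fin n) {a b F G : (Fin n → ℝ) → ℝ} {x : Fin n → ℝ}
    (ha : DifferentiableAt ℝ a x) (hb : DifferentiableAt ℝ b x)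
    (hF : DifferentiableAt ℝ F x) (hG : DifferentiableAt ℝ G x) (c : ℝ) :
    pd i (fun y => c * (b y * F y - a y * G y)) x =
      c * (b x * pd i F x - a x * pd i G x + (pd i b x * F x - pd i a x * G x)) := by
  have h := ((hb.hasFDerivAt.mul hF.hasFDerivAt).sub
    (ha.hasFDerivAt.mul hG.hasFDerivAt)).const_mul c
  have h' : fderiv ℝ (fun y => c * (b y * F y - a y * G y)) x = _ := h.fderiv
  simp only [pd, h', smul_apply, sub_apply,
    add_apply, smul_eq_mul]
  ring

/-- A symmetric matrix defines a symmetric bilinear form. -/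
lemma sum_mul_sum_symm {n : ℕ} (A : Fin n → Fin n → ℝ) (hA : ∀ i j, A i j = A j i)
    (u v : Fin n → ℝ) :
    ∑ i, u i * ∑ j, A i j * v j = ∑ i, v i * ∑ j, A i j * u j := by
  simp only [Finset.mul_sum]
  rw [Finset.sum_comm]
  refine Finset.sum_congr rfl fun i _ => Finset.sum_congr rfl fun j _ => ?_
  rw [hA j i]
  ring

/-- For smooth `η > 0` and symmetric `B^{ij}`, if `φ > 0` solves
the even-symmetric forward equation `η ∂φ/∂t = ∂_i(η B^{ij} ∂_j φ)`, `ψ > 0`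
solves the even-symmetric backward equation `−η ∂ψ/∂t = ∂_i(η B^{ij} ∂_j ψ)`
and `C₁ ≠ 0` is a constant, then `f := η φ ψ / C₁` satisfies pointwise
`∂f/∂t = ∂_i( B^{ij} f (∂_j ln φ − ∂_j ln ψ) )
       = ∂_i( (η/C₁) B^{ij} (ψ ∂_j φ − φ ∂_j ψ) )`. -/
theorem even_symmetric_bridge_density_equation {n : ℕ}
    (η : (Fin n → ℝ) → ℝ)
    (B : (Fin n → ℝ) → Fin n → Fin n → ℝ)
    (hη_smooth : ContDiff ℝ (⊤ : ℕ∞) η) (hη_pos : ∀ x, 0 < η x)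
    (hB_smooth : ∀ i j : Fin n, ContDiff ℝ (⊤ : ℕ∞) (fun x => B x i j))
    (hBsymm : ∀ x i j, B x i j = B x j i)
    (φ ψ : ℝ → (Fin n → ℝ) → ℝ)
    (hφ_smooth : ContDiff ℝ (⊤ : ℕ∞) (fun q : ℝ × (Fin n → ℝ) => φ q.1 q.2))
    (hψ_smooth : ContDiff ℝ (⊤ : ℕ∞) (fun q : ℝ × (Fin n → ℝ) => ψ q.1 q.2))
    (hφ_pos : ∀ t x, 0 < φ t x)
    (hψ_pos : ∀ t x, 0 < ψ t x)
    (hFPφ : ∀ (t : ℝ) (x : Fin n → ℝ),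
      η x * deriv (fun s => φ s x) t =
        ∑ i, pd i (fun y => η y * ∑ j, B y i j * pd j (φ t) y) x)
    (hFPψ : ∀ (t : ℝ) (x : Fin n → ℝ),
      -(η x * deriv (fun s => ψ s x) t) =
        ∑ i, pd i (fun y => η y * ∑ j, B y i j * pd j (ψ t) y) x)
    (C₁ : ℝ) (hC₁ : C₁ ≠ 0) :
    ∀ (t : ℝ) (x : Fin n → ℝ),
      deriv (fun s => η x * φ s x * ψ s x / C₁) t =
        ∑ i, pd i (fun y => ∑ j, B y i j * (η y * φ t y * ψ t y / C₁) *
          (pd j (fun z => Real.log (φ t z)) y - pd j (fun z => Real.log (ψ t z)) y)) x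
      ∧ deriv (fun s => η x * φ s x * ψ s x / C₁) t =
        ∑ i, pd i (fun y => (η y / C₁) *
          ∑ j, B y i j * (ψ t y * pd j (φ t) y - φ t y * pd j (ψ t) y)) x := by
  intro t x
  have hφt : ContDiff ℝ (⊤ : ℕ∞) (φ t) := hφ_smooth.comp (contDiff_prodMk_right t)
  have hψt : ContDiff ℝ (⊤ : ℕ∞) (ψ t) := hψ_smooth.comp (contDiff_prodMk_right t)
  have htop : ((⊤ : ℕ∞) : WithTop ℕ∞) ≠ 0 := by simp
  have hφs : DifferentiableAt ℝ (fun s => φ s x) t :=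
    (hφ_smooth.comp (contDiff_prodMk_left x)).differentiable htop t
  have hψs : DifferentiableAt ℝ (fun s => ψ s x) t :=
    (hψ_smooth.comp (contDiff_prodMk_left x)).differentiable htop t
  have hφd : Differentiable ℝ (φ t) := hφt.differentiable htop
  have hψd : Differentiable ℝ (ψ t) := hψt.differentiable htop
  have hflux : ∀ (u : (Fin n → ℝ) → ℝ), ContDiff ℝ (⊤ : ℕ∞) u → ∀ i,
      DifferentiableAt ℝ (fun y => η y * ∑ j, B y i j * pd j u y) x := fun u hu i =>
    (hη_smooth.mul (ContDiff.sum fun j _ =>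
      (hB_smooth i j).mul (contDiff_pd j hu))).differentiable htop x
  have key : deriv (fun s => η x * φ s x * ψ s x / C₁) t =
        ∑ i, pd i (fun y => (η y / C₁) *
          ∑ j, B y i j * (ψ t y * pd j (φ t) y - φ t y * pd j (ψ t) y)) x := by
    have hL : deriv (fun s => η x * φ s x * ψ s x / C₁) t =
        C₁⁻¹ * (ψ t x * (η x * deriv (fun s => φ s x) t) -
          φ t x * (-(η x * deriv (fun s => ψ s x) t))) := by
      have h : deriv (fun s => η x * φ s x * ψ s x / C₁) t = _ :=
        (((hφs.hasDerivAt.const_mul (η x)).mul hψs.hasDerivAt).div_const C₁).deriv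
      rw [h]
      ring
    have e : ∀ i, (fun y => (η y / C₁) *
          ∑ j, B y i j * (ψ t y * pd j (φ t) y - φ t y * pd j (ψ t) y)) =
        fun y => C₁⁻¹ * (ψ t y * (η y * ∑ j, B y i j * pd j (φ t) y) -
          φ t y * (η y * ∑ j, B y i j * pd j (ψ t) y)) := by
      intro i
      funext y
      simp only [Finset.mul_sum, ← Finset.sum_sub_distrib]
      refine Finset.sum_congr rfl fun j _ => ?_
      ring
    have hR := fun i => (congrArg (fun g => pd i g x) (e i)).trans
      (pd_flux i (hφd x) (hψd x) (hflux _ hφt i) (hflux _ hψt i) C₁⁻¹)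
    have hcross := sum_mul_sum_symm (B x) (hBsymm x) (fun i => pd i (ψ t) x)
      (fun i => pd i (φ t) x)
    have hzero : ∑ i, (pd i (ψ t) x * (η x * ∑ j, B x i j * pd j (φ t) x) -
        pd i (φ t) x * (η x * ∑ j, B x i j * pd j (ψ t) x)) = 0 := by
      simp only [mul_left_comm _ (η x), ← mul_sub, ← Finset.mul_sum, Finset.sum_sub_distrib]
      rw [hcross, sub_self, mul_zero]
    rw [hL, hFPφ, hFPψ, Finset.sum_congr rfl fun i _ => hR i, ← Finset.mul_sum,
      Finset.sum_add_distrib, hzero, add_zero, Finset.sum_sub_distrib, Finset.mul_sum,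
      Finset.mul_sum]
  refine ⟨?_, key⟩
  rw [key]
  refine Finset.sum_congr rfl fun i _ => ?_
  congr 1
  funext y
  rw [Finset.mul_sum]
  refine Finset.sum_congr rfl fun j _ => ?_
  have h1 := (hφ_pos t y).ne'
  have h2 := (hψ_pos t y).ne'
  rw [pd_log j (hφd y) h1, pd_log j (hψd y) h2]
  field_simp
end

section
/- Let b̂^{ik}(x,t) be smooth with ∂_i b̂^{ik} = 0 for each k, let β(x) > 0 be smooth, and set b^{ik} := β b̂^{ik}. Then for every smooth positive function φ̄(x,t) and every constant c > 0, the function ψ := c β φ̄ satisfies, pointwise and for each i, the drift-matching condition b^{ik} b^{jk} ψ^{-1} ∂_j ψ = b^{ik} φ̄^{-1} ∂_j( b^{jk} φ̄ ) (summation over j and k). Hence the class of coefficient fields for which Doob's and Anderson's correction drifts coincide is strictly wider than the odd-symmetric class ∂_i b^{ik} = 0. -/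
/-! For fixed `t` and `k`, the product rule together with `∑ j, ∂_j b̂^{jk} = 0` gives
`∑ j, ∂_j (β b̂^{jk} φ̄) = ∑ j, b̂^{jk} ∂_j (β φ̄)`: the function `β φ̄` absorbs both the density and
the divergence of `b = β b̂`. Since `ψ = c β φ̄`, we have `ψ⁻¹ ∂_j ψ = (β φ̄)⁻¹ ∂_j (β φ̄)`, so
multiplying by `b^{jk} = β b̂^{jk}` cancels `β` and leaves `φ̄⁻¹ b̂^{jk} ∂_j (β φ̄)`. The two drifts
therefore agree already for each `k` separately. -/

open MeasureTheory

theorem pd_mul {n : ℕ} (j : Fin n) {f g : (Fin n → ℝ) → ℝ} {x : Fin n → ℝ}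
    (hf : DifferentiableAt ℝ f x) (hg : DifferentiableAt ℝ g x) :
    pd j (fun y => f y * g y) x = f x * pd j g x + g x * pd j f x := by
  simp [pd, fderiv_fun_mul hf hg]

theorem pd_const_mul {n : ℕ} (j : Fin n) (c : ℝ) {f : (Fin n → ℝ) → ℝ} {x : Fin n → ℝ}
    (hf : DifferentiableAt ℝ f x) :
    pd j (fun y => c * f y) x = c * pd j f x := by
  simp [pd, fderiv_const_mul hf c]

/-- A jointly smooth function of `(t, x)` is differentiable in `x` at each fixed time. -/
theorem differentiable_slice {n : ℕ} {f : ℝ → (Fin n → ℝ) → ℝ}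
    (hf : ContDiff ℝ (⊤ : ℕ∞) (fun q : ℝ × (Fin n → ℝ) => f q.1 q.2)) (t : ℝ) :
    Differentiable ℝ (f t) :=
  (hf.differentiable (by simp)).comp
    ((differentiable_const t).prodMk differentiable_id)

/-- Leibniz rule `div (h B) = B · ∇h` for a divergence-free vector field `B`. -/
theorem sum_pd_mul_of_div_eq_zero {n : ℕ} {B : (Fin n → ℝ) → Fin n → ℝ} {h : (Fin n → ℝ) → ℝ}
    {x : Fin n → ℝ} (hB : ∀ j, DifferentiableAt ℝ (fun y => B y j) x)
    (hh : DifferentiableAt ℝ h x) (hdiv : ∑ j, pd j (fun y => B y j) x = 0) :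
    ∑ j, pd j (fun y => h y * B y j) x = ∑ j, B x j * pd j h x := by
  simp_rw [fun j => pd_mul j hh (hB j)]
  rw [Finset.sum_add_distrib, ← Finset.mul_sum, hdiv, mul_zero, zero_add]

/-- Let `b̂^{ik}(x,t)` be smooth with `∂_i b̂^{ik} = 0` for each
`k`, `β(x) > 0` smooth, and `b^{ik} := β b̂^{ik}`. Then for every smooth
positive `φ̄(x,t)` and constant `c > 0`, the function `ψ := c β φ̄` satisfies
the drift-matching (Doob = Anderson) condition pointwise, for each `i`:
`b^{ik} b^{jk} ψ⁻¹ ∂_j ψ = b^{ik} φ̄⁻¹ ∂_j(b^{jk} φ̄)` (sum over `j`, `k`). -/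
theorem doob_anderson_matching_beyond_odd_symmetric_class {n : ℕ}
    (bhat : ℝ → (Fin n → ℝ) → Fin n → Fin n → ℝ)
    (hbhat_smooth : ∀ i k : Fin n,
      ContDiff ℝ (⊤ : ℕ∞) (fun q : ℝ × (Fin n → ℝ) => bhat q.1 q.2 i k))
    (hbhat_div : ∀ (t : ℝ) (k : Fin n) (x : Fin n → ℝ),
      ∑ i, pd i (fun y => bhat t y i k) x = 0)
    (β : (Fin n → ℝ) → ℝ)
    (hβ_smooth : ContDiff ℝ (⊤ : ℕ∞) β) (hβ_pos : ∀ x, 0 < β x)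
    (φbar : ℝ → (Fin n → ℝ) → ℝ)
    (hφbar_smooth : ContDiff ℝ (⊤ : ℕ∞) (fun q : ℝ × (Fin n → ℝ) => φbar q.1 q.2))
    (hφbar_pos : ∀ t x, 0 < φbar t x)
    (c : ℝ) (hc : 0 < c) :
    ∀ (t : ℝ) (x : Fin n → ℝ) (i : Fin n),
      ∑ j, ∑ k, (β x * bhat t x i k) * (β x * bhat t x j k) *
          (c * β x * φbar t x)⁻¹ * pd j (fun y => c * β y * φbar t y) x
      = ∑ k, (β x * bhat t x i k) * (φbar t x)⁻¹ *
          ∑ j, pd j (fun y => β y * bhat t y j k * φbar t y) x := by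
  intro t x i
  have hβ : Differentiable ℝ β := hβ_smooth.differentiable (by simp)
  have hφ : Differentiable ℝ (φbar t) := differentiable_slice hφbar_smooth t
  have hh : DifferentiableAt ℝ (fun y => β y * φbar t y) x := (hβ x).mul (hφ x)
  have hB : ∀ j k, DifferentiableAt ℝ (fun y => bhat t y j k) x := fun j k =>
    differentiable_slice (f := fun s y => bhat s y j k) (hbhat_smooth j k) t x
  have hψ : ∀ j, pd j (fun y => c * β y * φbar t y) x
      = c * pd j (fun y => β y * φbar t y) x := fun j => by
    simp_rw [mul_assoc c]
    exact pd_const_mul j c hh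
  have hA : ∀ k, ∑ j, pd j (fun y => β y * bhat t y j k * φbar t y) x
      = ∑ j, bhat t x j k * pd j (fun y => β y * φbar t y) x := fun k => by
    simp_rw [mul_right_comm (β _) (bhat t _ _ k)]
    exact sum_pd_mul_of_div_eq_zero (B := fun y j => bhat t y j k)
      (fun j => hB j k) hh (hbhat_div t k x)
  have hβ0 := (hβ_pos x).ne'
  have hφ0 := (hφbar_pos t x).ne'
  rw [Finset.sum_comm]
  refine Finset.sum_congr rfl fun k _ => ?_
  rw [hA k, Finset.mul_sum]
  refine Finset.sum_congr rfl fun j _ => ?_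
  rw [hψ j]
  field_simp
end
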